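/- Let K be a field of characteristic zero, let d ≥ 2 be an integer, and let T : K[y] → K[y] be the K-linear operator defined on the monomial basis by T(y^n) := 0 if n ≢ d−1 (mod d) and T(y^{kd+d−1}) := (y^d + y)^k for k ≥ 0. Then T satisfies the recurrence T(y^n) = (y^d + y)·T(y^{n−d}) for all n ≥ d, as well as deg T(f) < deg f for every nonzero f; and its nilpotence index satisfies N_T(y^{kd+d−1}) = ⌊k/(d−1)⌋ + 1 for every k ≥ 0. In particular, limsup_{n→∞} (log N_T(y^n))/(log n) = 1. -/

import Mathlib

open Polynomial

/-- The nilpotence index of `f` with respect to `T`: the largest `k` with `T^k f ≠ 0`. -/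
noncomputable def nilpIndex {K : Type} [CommRing K]
    (T : Module.End K (Polynomial K)) (f : Polynomial K) : ℕ :=
  sSup {k : ℕ | (T ^ k) f ≠ 0}

/-
Write `d = e + 1`. The operator factors as `T = σ ∘ κ`, where `κ` extracts the coefficients of
`y ^ (n * d + e)` and `σ` substitutes `y ^ d + y`, so `T ^ (m + 1) = σ ∘ (κ ∘ σ) ^ m ∘ κ`. Since
`κ (y ^ (k * d + e)) = y ^ k` and `σ` is injective, the nilpotence index of `y ^ (k * d + e)` under
`T` is one more than that of `y ^ k` under `κ ∘ σ`. Up to terms of lower degree, `κ ∘ σ` is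
differentiation `e` times divided by `e!`, hence it lowers degrees by exactly `e` in characteristic
zero, and `y ^ k` survives exactly `⌊k / e⌋` applications.
-/

theorem le_natDegree_of_pow_apply_ne_zero {R : Type*} [Semiring R] {T : Module.End R R[X]}
    {f : R[X]} (hT : ∀ f, f ≠ 0 → (T f).degree < f.degree) {k : ℕ} (hk : (T ^ k) f ≠ 0) :
    k ≤ f.natDegree := by
  induction k generalizing f with
  | zero => exact Nat.zero_le _
  | succ k ih =>
    rw [pow_succ, Module.End.mul_apply] at hk
    have hTf : T f ≠ 0 := fun h => hk (by rw [h, map_zero])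
    have hf : f ≠ 0 := fun h => hTf (by rw [h, map_zero])
    exact (ih hk).trans_lt (natDegree_lt_natDegree hTf (hT f hf))

section NilpIndex

variable {R : Type} [CommRing R] {T : Module.End R R[X]} {f : R[X]}

theorem nilpIndex_eq_of_forall_pow_apply_ne_zero_iff {m : ℕ}
    (h : ∀ k, (T ^ k) f ≠ 0 ↔ k ≤ m) : nilpIndex T f = m := by
  simp only [nilpIndex, h]
  exact csSup_Iic

theorem nilpIndex_le_natDegree (hT : ∀ f, f ≠ 0 → (T f).degree < f.degree) :
    nilpIndex T f ≤ f.natDegree :=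
  csSup_le' fun _ hk => le_natDegree_of_pow_apply_ne_zero hT hk

end NilpIndex

section Operators

variable {R : Type*} [CommSemiring R] {e m n : ℕ} {f g : R[X]}

theorem coeff_X_pow_succ_add_X_pow (he : e ≠ 0) (k N : ℕ) :
    (((X : R[X]) ^ (e + 1) + X) ^ k).coeff N =
      if k ≤ N ∧ e ∣ N - k then (k.choose ((N - k) / e) : R) else 0 := by
  have hfactor : ((X : R[X]) ^ (e + 1) + X) ^ k = expand R e ((X + 1) ^ k) * X ^ k := by
    rw [map_pow, map_add, expand_X, map_one, ← mul_pow, add_mul, one_mul, pow_succ]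
  rw [hfactor, coeff_mul_X_pow', coeff_expand (Nat.pos_of_ne_zero he), ite_and]
  simp only [coeff_X_add_one_pow]

/-- The section operator `κ : ∑ aₙ yⁿ ↦ ∑ a_{n d + d - 1} yⁿ` for `d = e + 1`, the linear analogue
of the Cartier operator. Parametrizing by `e = d - 1` avoids truncated subtraction and the
degenerate case `d = 0`. -/
noncomputable def cartier (e : ℕ) : Module.End R R[X] where
  toFun f := (contract (e + 1) (X * f)).divX
  map_add' f g := by rw [mul_add, contract_add e.succ_ne_zero, divX_add]
  map_smul' a f := by
    ext n
    simp [coeff_divX, coeff_contract]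

@[simp]
theorem coeff_cartier (e : ℕ) (f : R[X]) (n : ℕ) :
    (cartier e f).coeff n = f.coeff (n * (e + 1) + e) := by
  have hidx : (n + 1) * (e + 1) = n * (e + 1) + e + 1 := by ring
  change ((contract (e + 1) (X * f)).divX).coeff n = _
  rw [coeff_divX, coeff_contract e.succ_ne_zero, hidx, coeff_X_mul]

theorem cartier_X_pow_of_mod_ne (hn : n % (e + 1) ≠ e) : cartier e ((X : R[X]) ^ n) = 0 := by
  ext m
  have : m * (e + 1) + e ≠ n := by
    rintro rfl
    exact hn (by rw [Nat.mul_add_mod', Nat.mod_eq_of_lt e.lt_succ_self])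
  simp [coeff_X_pow, this]

theorem cartier_X_pow_mul_add (e k : ℕ) :
    cartier e ((X : R[X]) ^ (k * (e + 1) + e)) = X ^ k := by
  ext m
  simp [coeff_X_pow]

theorem cartier_X_pow_succ_mul (e : ℕ) (f : R[X]) :
    cartier e (X ^ (e + 1) * f) = X * cartier e f := by
  ext n
  rw [coeff_cartier, coeff_X_pow_mul']
  cases n with
  | zero => simp
  | succ n =>
    have hidx : (n + 1) * (e + 1) + e = n * (e + 1) + e + (e + 1) := by ring
    rw [hidx, if_pos (Nat.le_add_left _ _), Nat.add_sub_cancel, coeff_X_mul, coeff_cartier]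

theorem natDegree_cartier_mul_add_le (hf : cartier e f ≠ 0) :
    (cartier e f).natDegree * (e + 1) + e ≤ f.natDegree := by
  apply le_natDegree_of_ne_zero
  rwa [← coeff_cartier, coeff_natDegree, leadingCoeff_ne_zero]

/-- The substitution `σ : g ↦ g (y ^ d + y)` for `d = e + 1`, as a linear operator. -/
noncomputable def substXPowAddX (e : ℕ) : Module.End R R[X] :=
  (aeval ((X : R[X]) ^ (e + 1) + X)).toLinearMap

theorem substXPowAddX_apply (e : ℕ) (g : R[X]) :
    substXPowAddX e g = g.comp (X ^ (e + 1) + X) :=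
  rfl

theorem substXPowAddX_X_pow (e k : ℕ) :
    substXPowAddX e ((X : R[X]) ^ k) = (X ^ (e + 1) + X) ^ k := by
  rw [substXPowAddX_apply, X_pow_comp]

theorem natDegree_X_pow_succ_add_X_le (e : ℕ) : ((X : R[X]) ^ (e + 1) + X).natDegree ≤ e + 1 :=
  natDegree_add_le_of_degree_le (natDegree_X_pow_le _) (natDegree_X_le.trans (Nat.le_add_left _ _))

theorem substXPowAddX_eq_zero_iff (he : e ≠ 0) : substXPowAddX e g = 0 ↔ g = 0 := by
  refine ⟨fun h => ?_, fun h => by rw [h, map_zero]⟩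
  nontriviality R
  have hdeg : (X : R[X]).degree < ((e + 1 : ℕ) : WithBot ℕ) := by
    rw [degree_X]
    exact_mod_cast Nat.lt_succ_of_le (Nat.one_le_iff_ne_zero.2 he)
  have hmonic : ((X : R[X]) ^ (e + 1) + X).Monic := monic_X_pow_add hdeg
  have hnat : ((X : R[X]) ^ (e + 1) + X).natDegree = e + 1 := by
    rw [natDegree_add_eq_left_of_degree_lt (by rwa [degree_X_pow]), natDegree_X_pow]
  have hlead := coeff_comp_degree_mul_degree (p := g) (hnat.trans_ne e.succ_ne_zero)
  rwa [← substXPowAddX_apply, h, coeff_zero, hmonic.leadingCoeff, one_pow, mul_one, eq_comm,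
    leadingCoeff_eq_zero] at hlead

/-- The operator `T = σ ∘ κ`, which sends `y ^ (k * d + d - 1)` to `(y ^ d + y) ^ k` and the other
monomials to zero, for `d = e + 1`. -/
noncomputable def substCartier (e : ℕ) : Module.End R R[X] :=
  substXPowAddX e * cartier e

theorem eq_substCartier {T : Module.End R R[X]} (hT0 : ∀ n, n % (e + 1) ≠ e → T (X ^ n) = 0)
    (hT1 : ∀ k, T (X ^ (k * (e + 1) + e)) = (X ^ (e + 1) + X) ^ k) : T = substCartier e := by
  refine lhom_ext' fun n => LinearMap.ext_ring ?_
  simp only [LinearMap.comp_apply, monomial_one_right_eq_X_pow, substCartier, Module.End.mul_apply]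
  by_cases hn : n % (e + 1) = e
  · obtain ⟨k, rfl⟩ : ∃ k, n = k * (e + 1) + e :=
      ⟨n / (e + 1), by conv_lhs => rw [← Nat.div_add_mod' n (e + 1), hn]⟩
    rw [hT1, cartier_X_pow_mul_add, substXPowAddX_X_pow]
  · rw [hT0 n hn, cartier_X_pow_of_mod_ne hn, map_zero]

theorem substCartier_X_pow_succ_mul (e : ℕ) (f : R[X]) :
    substCartier e (X ^ (e + 1) * f) = (X ^ (e + 1) + X) * substCartier e f := by
  simp only [substCartier, Module.End.mul_apply, cartier_X_pow_succ_mul, substXPowAddX_apply,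
    mul_comp, X_comp]

theorem degree_substCartier_lt (he : e ≠ 0) (hf : f ≠ 0) :
    (substCartier e f).degree < f.degree := by
  rw [substCartier, Module.End.mul_apply]
  by_cases hκ : cartier e f = 0
  · rw [hκ, map_zero, degree_zero]
    exact bot_lt_iff_ne_bot.2 (degree_ne_bot.2 hf)
  · have hle : (substXPowAddX e (cartier e f)).natDegree ≤ (cartier e f).natDegree * (e + 1) :=
      natDegree_comp_le.trans (Nat.mul_le_mul_left _ (natDegree_X_pow_succ_add_X_le e))
    have hlt : (substXPowAddX e (cartier e f)).natDegree < f.natDegree := by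
      have := natDegree_cartier_mul_add_le hκ
      omega
    exact degree_lt_degree hlt

/-- The operator `κ ∘ σ`, whose powers determine those of `T = σ ∘ κ`. -/
noncomputable def cartierSubst (e : ℕ) : Module.End R R[X] :=
  cartier e * substXPowAddX e

theorem coeff_cartierSubst_X_pow (he : e ≠ 0) (n : ℕ) :
    (cartierSubst e ((X : R[X]) ^ (n + e))).coeff n = (n + e).choose e := by
  have hidx : n * (e + 1) + e = e * n + (n + e) := by ring
  rw [cartierSubst, Module.End.mul_apply, coeff_cartier, substXPowAddX_X_pow, hidx,
    coeff_X_pow_succ_add_X_pow he, Nat.add_sub_cancel,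
    Nat.mul_div_cancel_left _ (Nat.pos_of_ne_zero he),
    if_pos ⟨Nat.le_add_left _ _, dvd_mul_right _ _⟩, Nat.choose_symm_add]

theorem coeff_cartierSubst_X_pow_of_lt {k : ℕ} (he : e ≠ 0) (hk : k < n + e) :
    (cartierSubst e ((X : R[X]) ^ k)).coeff n = 0 := by
  rw [cartierSubst, Module.End.mul_apply, coeff_cartier, substXPowAddX_X_pow,
    coeff_X_pow_succ_add_X_pow he, ite_eq_right_iff]
  rintro ⟨hle, j, hj⟩
  have hidx : n * (e + 1) + e = e * j + k := by omega
  have hnj : n < j := by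
    by_contra! hjn
    have := Nat.mul_le_mul_left e hjn
    linarith
  have hkj : k < j := by
    have := Nat.mul_le_mul_left e (Nat.succ_le_of_lt hnj)
    linarith
  rw [hj, Nat.mul_div_cancel_left _ (Nat.pos_of_ne_zero he), Nat.choose_eq_zero_of_lt hkj,
    Nat.cast_zero]

theorem coeff_cartierSubst (he : e ≠ 0) (hg : g.natDegree ≤ n + e) :
    (cartierSubst e g).coeff n = (n + e).choose e * g.coeff (n + e) := by
  conv_lhs => rw [g.as_sum_range_C_mul_X_pow' (Nat.lt_succ_of_le hg)]
  simp only [← smul_eq_C_mul, map_sum, map_smul, finsetSum_coeff, coeff_smul, smul_eq_mul]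
  rw [Finset.sum_range_succ, coeff_cartierSubst_X_pow he, mul_comm, Finset.sum_eq_zero, zero_add]
  intro k hk
  rw [coeff_cartierSubst_X_pow_of_lt he (Finset.mem_range.1 hk), mul_zero]

theorem coeff_cartierSubst_eq_zero (he : e ≠ 0) (hg : g.natDegree < n + e) :
    (cartierSubst e g).coeff n = 0 := by
  rw [coeff_cartierSubst he hg.le, coeff_eq_zero_of_natDegree_lt hg, mul_zero]

theorem natDegree_cartierSubst_le (he : e ≠ 0) (hg : g.natDegree ≤ n + e) :
    (cartierSubst e g).natDegree ≤ n :=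
  natDegree_le_iff_coeff_eq_zero.2 fun _ hN =>
    coeff_cartierSubst_eq_zero he (hg.trans_lt (Nat.add_lt_add_right hN e))

theorem cartierSubst_eq_zero (he : e ≠ 0) (hg : g.natDegree < e) : cartierSubst e g = 0 := by
  ext n
  rw [coeff_zero, coeff_cartierSubst_eq_zero he (hg.trans_le (Nat.le_add_left e n))]

theorem cartierSubst_pow_eq_zero (he : e ≠ 0) (hg : g.natDegree < m * e) :
    (cartierSubst e ^ m) g = 0 := by
  induction m generalizing g with
  | zero => simp at hg
  | succ m ih =>
    rw [pow_succ, Module.End.mul_apply]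
    rcases lt_or_ge g.natDegree e with hlt | hge
    · rw [cartierSubst_eq_zero he hlt, map_zero]
    · have hdeg := natDegree_cartierSubst_le he (Nat.sub_add_cancel hge).ge
      rw [Nat.succ_mul] at hg
      exact ih (by omega)

open scoped Nat in
theorem factorial_mul_coeff_cartierSubst_pow (he : e ≠ 0) (hg : g.natDegree ≤ n + m * e) :
    (n ! : R) * (e ! : R) ^ m * ((cartierSubst e ^ m) g).coeff n =
      ((n + m * e)! : R) * g.coeff (n + m * e) := by
  induction m generalizing g with
  | zero => simp
  | succ m ih =>
    have hidx : n + (m + 1) * e = n + m * e + e := by ring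
    rw [hidx] at hg ⊢
    calc
      (n ! : R) * (e ! : R) ^ (m + 1) * ((cartierSubst e ^ (m + 1)) g).coeff n
      _ = e ! * (n ! * (e ! : R) ^ m * ((cartierSubst e ^ m) (cartierSubst e g)).coeff n) := by
          rw [pow_succ (cartierSubst e), Module.End.mul_apply]
          ring
      _ = e ! * ((n + m * e)! * ((n + m * e + e).choose e * g.coeff (n + m * e + e))) := by
          rw [ih (natDegree_cartierSubst_le he hg), coeff_cartierSubst he hg]
      _ = (n + m * e + e)! * g.coeff (n + m * e + e) := by
          rw [← Nat.add_choose_mul_factorial_mul_factorial (n + m * e) e]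
          push_cast
          ring

theorem cartierSubst_pow_eq_zero_iff_of_monic [CharZero R] (he : e ≠ 0) (hg : g.Monic) :
    (cartierSubst e ^ m) g = 0 ↔ g.natDegree < m * e := by
  refine ⟨fun hzero => ?_, cartierSubst_pow_eq_zero he⟩
  by_contra! hle
  obtain ⟨n, hn⟩ := Nat.exists_eq_add_of_le' hle
  have hfactorial := factorial_mul_coeff_cartierSubst_pow he hn.le
  rw [hzero, coeff_zero, mul_zero, ← hn, hg.coeff_natDegree, mul_one] at hfactorial
  exact Nat.factorial_ne_zero _ (Nat.cast_eq_zero.1 hfactorial.symm)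

theorem substCartier_pow_succ (e m : ℕ) :
    (substCartier e : Module.End R R[X]) ^ (m + 1) =
      substXPowAddX e * cartierSubst e ^ m * cartier e := by
  rw [pow_succ, substCartier, cartierSubst, ← mul_assoc, mul_pow_mul]

theorem substCartier_pow_X_pow_ne_zero_iff [CharZero R] (he : e ≠ 0) (j k : ℕ) :
    (substCartier e ^ j) ((X : R[X]) ^ (k * (e + 1) + e)) ≠ 0 ↔ j ≤ k / e + 1 := by
  cases j with
  | zero => simpa using (monic_X_pow (k * (e + 1) + e)).ne_zero
  | succ m =>
    rw [substCartier_pow_succ, Module.End.mul_apply, Module.End.mul_apply, cartier_X_pow_mul_add,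
      Ne, substXPowAddX_eq_zero_iff he, cartierSubst_pow_eq_zero_iff_of_monic he (monic_X_pow k),
      natDegree_X_pow, not_lt, Nat.add_le_add_iff_right,
      Nat.le_div_iff_mul_le (Nat.pos_of_ne_zero he)]

end Operators

theorem nilpIndex_substCartier_X_pow {R : Type} [CommRing R] [CharZero R] {e : ℕ} (he : e ≠ 0)
    (k : ℕ) : nilpIndex (substCartier e) ((X : R[X]) ^ (k * (e + 1) + e)) = k / e + 1 :=
  nilpIndex_eq_of_forall_pow_apply_ne_zero_iff fun j => substCartier_pow_X_pow_ne_zero_iff he j k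

section Limsup

open Filter Topology

theorem log_div_log_le_one {m n : ℕ} (h : m ≤ n) : Real.log m / Real.log n ≤ 1 := by
  refine div_le_one_of_le₀ ?_ (Real.log_natCast_nonneg n)
  rcases m.eq_zero_or_pos with rfl | hm
  · simpa using Real.log_natCast_nonneg n
  · exact Real.log_le_log (mod_cast hm) (mod_cast h)

theorem one_sub_log_div_log_le {m n : ℕ} {C : ℝ} (hn : 1 < n) (h : (n : ℝ) ≤ C * m) :
    1 - Real.log C / Real.log n ≤ Real.log m / Real.log n := by
  have hlog : 0 < Real.log n := Real.log_pos (mod_cast hn)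
  have hpos : 0 < C * m := (by positivity : (0 : ℝ) < n).trans_le h
  have hCm : Real.log n ≤ Real.log C + Real.log m := by
    rw [← Real.log_mul (left_ne_zero_of_mul hpos.ne') (right_ne_zero_of_mul hpos.ne')]
    exact Real.log_le_log (by positivity) h
  rw [one_sub_div hlog.ne']
  gcongr
  linarith

theorem limsup_log_div_log_eq_one {u : ℕ → ℕ} {C : ℝ} (hle : ∀ᶠ n : ℕ in atTop, u n ≤ n)
    (hge : ∃ᶠ n : ℕ in atTop, (n : ℝ) ≤ C * u n) :
    limsup (fun n : ℕ => Real.log (u n) / Real.log n) atTop = 1 := by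
  have hupper : ∀ᶠ n in atTop, Real.log (u n) / Real.log n ≤ 1 :=
    hle.mono fun _ => log_div_log_le_one
  have hnonneg (n : ℕ) : 0 ≤ Real.log (u n) / Real.log n :=
    div_nonneg (Real.log_natCast_nonneg _) (Real.log_natCast_nonneg _)
  refine le_antisymm (limsup_le_of_le (isCoboundedUnder_le_of_le _ hnonneg) hupper) ?_
  refine le_of_forall_lt_imp_le_of_dense fun c hc => ?_
  have hlim : Tendsto (fun n : ℕ => 1 - Real.log C / Real.log n) atTop (𝓝 (1 - 0)) :=
    tendsto_const_nhds.sub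
      ((Real.tendsto_log_atTop.comp tendsto_natCast_atTop_atTop).const_div_atTop _)
  rw [sub_zero] at hlim
  have hfreq : ∃ᶠ n : ℕ in atTop, c ≤ Real.log (u n) / Real.log n := by
    have hev := (hlim.eventually (eventually_ge_nhds hc)).and (eventually_gt_atTop 1)
    refine (hge.and_eventually hev).mono fun n ⟨hn, hcn, hn1⟩ => ?_
    exact hcn.trans (one_sub_log_div_log_le hn1 hn)
  exact le_limsup_of_frequently_le hfreq (isBoundedUnder_of_eventually_le hupper)

end Limsup

theorem mul_succ_add_le_mul_div_add_one {e : ℕ} (he : e ≠ 0) (k : ℕ) :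
    k * (e + 1) + e ≤ (e + 1) * e * (k / e + 1) := by
  have hk : k + 1 ≤ e * (k / e + 1) := Nat.lt_mul_div_succ k (Nat.pos_of_ne_zero he)
  calc k * (e + 1) + e ≤ (e + 1) * (k + 1) := by linarith
    _ ≤ (e + 1) * (e * (k / e + 1)) := Nat.mul_le_mul_left _ hk
    _ = (e + 1) * e * (k / e + 1) := (mul_assoc _ _ _).symm

theorem limsup_log_nilpIndex_substCartier {R : Type} [CommRing R] [CharZero R] {e : ℕ}
    (he : e ≠ 0) :
    Filter.limsup
      (fun n : ℕ => Real.log (nilpIndex (substCartier e) ((X : R[X]) ^ n) : ℝ) / Real.log (n : ℝ))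
      Filter.atTop = 1 := by
  have hφ : Filter.Tendsto (fun k => k * (e + 1) + e) Filter.atTop Filter.atTop := by
    refine Filter.tendsto_atTop_mono (fun k => ?_) Filter.tendsto_id
    exact (Nat.le_mul_of_pos_right k e.succ_pos).trans (Nat.le_add_right _ _)
  refine limsup_log_div_log_eq_one (C := (e + 1) * e) (.of_forall fun n => ?_)
    (hφ.frequently (.of_forall fun k => ?_))
  · exact (nilpIndex_le_natDegree fun _ => degree_substCartier_lt he).trans (natDegree_X_pow_le n)
  · rw [nilpIndex_substCartier_X_pow he]
    exact_mod_cast mul_succ_add_le_mul_div_add_one he k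

theorem stmt19_general {R : Type} [CommRing R] [CharZero R] (d : ℕ) (hd : 2 ≤ d)
    (T : Module.End R R[X])
    (hT0 : ∀ n : ℕ, n % d ≠ d - 1 → T (X ^ n) = 0)
    (hT1 : ∀ k : ℕ, T (X ^ (k * d + d - 1)) = (X ^ d + X) ^ k) :
    (∀ n : ℕ, d ≤ n → T (X ^ n) = (X ^ d + X) * T (X ^ (n - d))) ∧
    (∀ f : R[X], f ≠ 0 → (T f).degree < f.degree) ∧
    (∀ k : ℕ, nilpIndex T (X ^ (k * d + d - 1)) = k / (d - 1) + 1) ∧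
    Filter.limsup
      (fun n : ℕ => Real.log (nilpIndex T (X ^ n) : ℝ) / Real.log (n : ℝ))
      Filter.atTop = 1 := by
  obtain ⟨e, rfl⟩ : ∃ e, d = e + 1 := ⟨d - 1, by omega⟩
  have he : e ≠ 0 := by omega
  obtain rfl : T = substCartier e := eq_substCartier hT0 hT1
  refine ⟨fun n hn => ?_, fun f => degree_substCartier_lt he, nilpIndex_substCartier_X_pow he,
    limsup_log_nilpIndex_substCartier he⟩
  rw [← substCartier_X_pow_succ_mul, ← pow_add, Nat.add_sub_cancel' hn]

/-- A characteristic-zero example with linear nilpotence-index growth. -/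
theorem stmt19 {K : Type} [Field K] [CharZero K] (d : ℕ) (hd : 2 ≤ d)
    (T : Module.End K (Polynomial K))
    (hT0 : ∀ n : ℕ, n % d ≠ d - 1 → T ((X : Polynomial K) ^ n) = 0)
    (hT1 : ∀ k : ℕ, T ((X : Polynomial K) ^ (k * d + d - 1)) =
      ((X : Polynomial K) ^ d + X) ^ k) :
    (∀ n : ℕ, d ≤ n →
      T ((X : Polynomial K) ^ n) = ((X : Polynomial K) ^ d + X) * T (X ^ (n - d))) ∧
    (∀ f : Polynomial K, f ≠ 0 → (T f).degree < f.degree) ∧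
    (∀ k : ℕ, nilpIndex T ((X : Polynomial K) ^ (k * d + d - 1)) = k / (d - 1) + 1) ∧
    Filter.limsup
      (fun n : ℕ => Real.log (nilpIndex T ((X : Polynomial K) ^ n) : ℝ) / Real.log (n : ℝ))
      Filter.atTop = 1 :=
  stmt19_general d hd T hT0 hT1
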